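/- arXiv:2206.05482 — 3 statements merged into one kernel-verified Lean document; each statement's English description precedes it below -/
import Mathlib

section
/- Let Â = A + εB be an n×n dual matrix. Then Â has dual index one if and only if Â has a dual group generalized inverse, i.e. there exists a dual matrix Ĝ with ÂĜÂ = Â, ĜÂĜ = Ĝ and ÂĜ = ĜÂ. -/
open Matrix

/-- The dual matrix `A + εB`, viewed as a matrix over the dual numbers `ℝ[ε]`. -/
def dm {n : ℕ} (A B : Matrix (Fin n) (Fin n) ℝ) :
    Matrix (Fin n) (Fin n) (DualNumber ℝ) :=
  fun i j => TrivSqZeroExt.inl (A i j) + TrivSqZeroExt.inr (B i j)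

/-- A dual matrix has dual index one iff its column space equals that of its square,
equivalently (as shown in the paper) there is a dual matrix `X` with `M² * X = M`. -/
def DualIndexOne {n : ℕ} (M : Matrix (Fin n) (Fin n) (DualNumber ℝ)) : Prop :=
  ∃ X : Matrix (Fin n) (Fin n) (DualNumber ℝ), M * M * X = M

/-- `G` is a group inverse of the real matrix `A`. -/
def IsGroupInv {n : ℕ} (A G : Matrix (Fin n) (Fin n) ℝ) : Prop :=
  A * G * A = A ∧ G * A * G = G ∧ A * G = G * A

/-- `X` is the Moore–Penrose inverse of the real matrix `A`. -/
def IsMoorePenrose {n : ℕ} (A X : Matrix (Fin n) (Fin n) ℝ) : Prop :=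
  A * X * A = A ∧ X * A * X = X ∧ (A * X)ᵀ = A * X ∧ (X * A)ᵀ = X * A

/-- `C` is a core inverse of the real matrix `A`. -/
def IsCoreInv {n : ℕ} (A C : Matrix (Fin n) (Fin n) ℝ) : Prop :=
  A * C * A = A ∧ A * (C * C) = C ∧ (A * C)ᵀ = A * C

/-- `G` is a dual group generalized inverse (DGGI) of the dual matrix `M`. -/
def IsDGGI {n : ℕ} (M G : Matrix (Fin n) (Fin n) (DualNumber ℝ)) : Prop :=
  M * G * M = M ∧ G * M * G = G ∧ M * G = G * M

/-- `X` is a dual Moore–Penrose generalized inverse (DMPGI) of the dual matrix `M`. -/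
def IsDMPGI {n : ℕ} (M X : Matrix (Fin n) (Fin n) (DualNumber ℝ)) : Prop :=
  M * X * M = M ∧ X * M * X = X ∧ (M * X)ᵀ = M * X ∧ (X * M)ᵀ = X * M

/-- `G` is a dual core generalized inverse (DCGI) of the dual matrix `M`. -/
def IsDCGI {n : ℕ} (M G : Matrix (Fin n) (Fin n) (DualNumber ℝ)) : Prop :=
  M * G * M = M ∧ M * (G * G) = G ∧ (M * G)ᵀ = M * G

/-
If `a² x = a` in a semigroup, then `a x²` is the natural candidate for a group inverse of `a`, and
it is one as soon as `a` can be cancelled from the left of equations `a (a c) = a (a d)`. For a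
matrix this cancellation says that the matrix is injective on its column space. The equation
`M² X = M` makes `M` map its column space onto itself, and a surjective endomorphism of a finitely
generated module over a ring with the Orzech property is injective. The dual numbers have
this property because they form a commutative ring.
-/

/-- `g` is a group inverse of `a`: an inner and outer inverse of `a` that commutes with it. For
dual matrices this unfolds to `IsDGGI`. -/
def IsGroupInverse {S : Type*} [Mul S] (a g : S) : Prop :=
  a * g * a = a ∧ g * a * g = g ∧ a * g = g * a

section Semigroup

variable {S : Type*} [Semigroup S] {a g x : S}

theorem IsGroupInverse.mul_self_mul_eq_self (h : IsGroupInverse a g) : a * a * g = a := by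
  obtain ⟨haga, -, hcomm⟩ := h
  rw [mul_assoc, hcomm, ← mul_assoc, haga]

theorem isGroupInverse_of_mul_self_mul (hx : a * a * x = a)
    (hcancel : ∀ c d : S, a * a * c = a * a * d → a * c = a * d) :
    IsGroupInverse a (a * x * x) := by
  have haxa : a * x * a = a := calc
    a * x * a = a * (x * a) := mul_assoc a x a
    _ = a * (a * x) := hcancel _ _ (by
      rw [← mul_assoc, hx, ← mul_assoc, mul_assoc a a a, mul_assoc a (a * a) x, hx])
    _ = a := by rw [← mul_assoc, hx]
  have hleft : a * (a * x * x) = a * x := by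
    rw [← mul_assoc, ← mul_assoc, hx]
  have hright : a * x * x * a = a * x := calc
    a * x * x * a = a * (x * x * a) := by simp only [mul_assoc]
    _ = a * x := hcancel _ _ (by rw [← mul_assoc, ← mul_assoc, hx, haxa])
  refine ⟨?_, ?_, ?_⟩
  · rw [hleft, haxa]
  · rw [hright, ← mul_assoc, ← mul_assoc, haxa]
  · rw [hleft, hright]

end Semigroup

theorem injOn_range_of_range_le_range_comp_self {R V : Type*} [Semiring R] [OrzechProperty R]
    [AddCommMonoid V] [Module R V] [Module.Finite R V] {f : V →ₗ[R] V}
    (hf : f.range ≤ (f ∘ₗ f).range) : Set.InjOn f f.range := by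
  have hsurj : Function.Surjective (f.rangeRestrict.domRestrict f.range) := by
    rintro ⟨y, hy⟩
    obtain ⟨v, rfl⟩ := hf hy
    exact ⟨⟨f v, v, rfl⟩, rfl⟩
  have hinj := OrzechProperty.injective_of_surjective_endomorphism _ hsurj
  exact fun u hu v hv huv ↦
    congrArg Subtype.val (@hinj ⟨u, hu⟩ ⟨v, hv⟩ (Subtype.ext huv))

theorem moduleFinite_mulOpposite_self (R : Type*) [Semiring R] : Module.Finite Rᵐᵒᵖ R :=
  .of_surjective (LinearMap.toSpanSingleton Rᵐᵒᵖ R 1) fun r ↦ ⟨.op r, one_mul r⟩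

section Matrix

variable {ι R : Type*} [Fintype ι] [Semiring R] [OrzechProperty Rᵐᵒᵖ] {M X : Matrix ι ι R}

theorem matrix_mul_left_cancel_of_mul_self_mul (hX : M * M * X = M) {C D : Matrix ι ι R}
    (hCD : M * M * C = M * M * D) : M * C = M * D := by
  -- Over a noncommutative `R`, `M *ᵥ ·` is linear for the right action of `R` on columns.
  let f : (ι → R) →ₗ[Rᵐᵒᵖ] (ι → R) := mulVecBilin ℕ Rᵐᵒᵖ M
  have := moduleFinite_mulOpposite_self R
  have hrange : f.range ≤ (f ∘ₗ f).range := by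
    rintro _ ⟨v, rfl⟩
    refine ⟨X *ᵥ v, ?_⟩
    change M *ᵥ (M *ᵥ (X *ᵥ v)) = M *ᵥ v
    rw [mulVec_mulVec, mulVec_mulVec, hX]
  refine mulVec_injective (funext fun v ↦ ?_)
  rw [← mulVec_mulVec, ← mulVec_mulVec]
  refine injOn_range_of_range_le_range_comp_self hrange ⟨_, rfl⟩ ⟨_, rfl⟩ ?_
  change M *ᵥ (M *ᵥ (C *ᵥ v)) = M *ᵥ (M *ᵥ (D *ᵥ v))
  simp only [mulVec_mulVec, ← mul_assoc, hCD]

theorem stmt4_general (M : Matrix ι ι R) :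
    (∃ X, M * M * X = M) ↔ ∃ G, IsGroupInverse M G := by
  constructor
  · rintro ⟨X, hX⟩
    exact ⟨M * X * X, isGroupInverse_of_mul_self_mul hX
      fun _ _ ↦ matrix_mul_left_cancel_of_mul_self_mul hX⟩
  · rintro ⟨G, hG⟩
    exact ⟨G, hG.mul_self_mul_eq_self⟩

end Matrix

theorem stmt4 {n : ℕ} (A B : Matrix (Fin n) (Fin n) ℝ) :
    DualIndexOne (dm A B) ↔
      ∃ G : Matrix (Fin n) (Fin n) (DualNumber ℝ), IsDGGI (dm A B) G :=
  stmt4_general (dm A B)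
end

section
/- Let Â = A + εB be an n×n dual matrix. Then Â has a dual core generalized inverse (a dual matrix Ĝ with ÂĜÂ = Â, ÂĜ² = Ĝ, (ÂĜ)^T = ÂĜ) if and only if Â has dual index one. -/
open Matrix

/-!
Work in a star ring in which every `1 + d⋆ * d` is a unit. For an idempotent `e` the element
`s = e + e⋆ - 1` satisfies `s ^ 2 = 1 + (e - e⋆)⋆ * (e - e⋆)`, so it is a unit, and `e * s⁻¹` is
the self-adjoint projection with the same right ideal as `e`. Hence every regular `a` has a
`{1,3}`-inverse `y`, that is, `a * y * a = a` with `a * y` self-adjoint, and if moreover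
`a * a * x = a`, then `a * x * y` is a core inverse of `a`.

For a square matrix `M` over a commutative ring, `M * M * X = M` says that `M` maps its column
space onto itself. A surjective endomorphism of a finitely generated module is injective, and
therefore `M * X * M = M`, so that `M` is regular. Units of matrices over the dual numbers are
detected on the real part, where `1 + Dᵀ * D` is positive definite.
-/

/-- `g` is a core inverse of `a` in a semigroup with involution. For matrices the involution is the
conjugate transpose, so for the trivial star on the entries this is `IsDCGI`. -/
def IsCoreInverse {S : Type*} [Mul S] [Star S] (a g : S) : Prop :=
  a * g * a = a ∧ a * (g * g) = g ∧ IsSelfAdjoint (a * g)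

section Semigroup

variable {S : Type*} [Semigroup S] [Star S] {a g x y : S}

theorem IsCoreInverse.mul_self_mul_eq (h : IsCoreInverse a g) : a * a * (g * g * a) = a := by
  obtain ⟨haga, hagg, -⟩ := h
  calc a * a * (g * g * a) = a * (a * (g * g)) * a := by simp only [mul_assoc]
    _ = a := by rw [hagg, haga]

theorem isCoreInverse_mul_mul (hx : a * a * x = a) (hy : a * y * a = a)
    (hay : IsSelfAdjoint (a * y)) : IsCoreInverse a (a * x * y) := by
  have hmul : a * (a * x * y) = a * y := by rw [← mul_assoc, ← mul_assoc, hx]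
  refine ⟨by rw [hmul, hy], ?_, by rwa [hmul]⟩
  calc a * (a * x * y * (a * x * y)) = a * (a * x * y) * a * x * y := by simp only [mul_assoc]
    _ = a * x * y := by rw [hmul, hy]

end Semigroup

section StarRing

variable {S : Type*} [Ring S] [StarRing S] {a e x : S}

theorem one_add_star_sub_mul_sub_eq_sq (he : IsIdempotentElem e) :
    1 + star (e - star e) * (e - star e) = (e + star e - 1) ^ 2 := by
  have he' : star e * star e = star e := he.star.eq
  simp only [star_sub, star_star, sq, mul_add, mul_sub, add_mul, sub_mul, he.eq, he', mul_one,
    one_mul]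
  abel

theorem exists_isStarProjection_of_isUnit (he : IsIdempotentElem e)
    (hs : IsUnit (e + star e - 1)) : ∃ p, IsStarProjection p ∧ e * p = p ∧ p * e = e := by
  obtain ⟨s, hs⟩ := hs
  have hse : s * e = star e * e := by rw [hs, sub_mul, add_mul, he.eq, one_mul]; abel
  have hes : star e * s = star e * e := by
    rw [hs, mul_sub, mul_add, he.star.eq, mul_one]; abel
  have hcomm : e * ↑s⁻¹ = ↑s⁻¹ * star e := by
    rw [Units.mul_inv_eq_iff_eq_mul, mul_assoc, hes, ← hse, Units.inv_mul_cancel_left]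
  have hpe : e * ↑s⁻¹ * e = e := by rw [hcomm, mul_assoc, ← hse, Units.inv_mul_cancel_left]
  have hs_star : star s = s := Units.ext (by simp [hs, add_comm])
  have hs_inv : star (↑s⁻¹ : S) = ↑s⁻¹ := by rw [← Units.coe_star_inv, hs_star]
  refine ⟨e * ↑s⁻¹, ⟨?_, ?_⟩, ?_, hpe⟩
  · rw [IsIdempotentElem, ← mul_assoc, hpe]
  · rw [isSelfAdjoint_iff, star_mul, hs_inv, hcomm]
  · rw [← mul_assoc, he.eq]

theorem exists_isSelfAdjoint_mul_of_regular (hS : ∀ d : S, IsUnit (1 + star d * d))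
    (hx : a * x * a = a) : ∃ y, a * y * a = a ∧ IsSelfAdjoint (a * y) := by
  have he : IsIdempotentElem (a * x) := by rw [IsIdempotentElem, ← mul_assoc, hx]
  have hs : IsUnit (a * x + star (a * x) - 1) := by
    rw [← isUnit_pow_iff two_ne_zero, ← one_add_star_sub_mul_sub_eq_sq he]
    exact hS _
  obtain ⟨p, hp, hep, hpe⟩ := exists_isStarProjection_of_isUnit he hs
  refine ⟨x * p, ?_, by rw [← mul_assoc, hep]; exact hp.isSelfAdjoint⟩
  calc a * (x * p) * a = p * a := by rw [← mul_assoc, hep]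
    _ = p * (a * x) * a := by rw [mul_assoc, hx]
    _ = a := by rw [hpe, hx]

end StarRing

theorem moduleEnd_mul_mul_eq_of_mul_self_mul_eq {R N : Type*} [Semiring R] [OrzechProperty R]
    [AddCommMonoid N] [Module R N] [Module.Finite R N] {f g : Module.End R N}
    (h : f * f * g = f) : f * g * f = f := by
  have happly (v : N) : f (f (g v)) = f v := LinearMap.congr_fun h v
  let r : Module.End R (LinearMap.range f) := f.rangeRestrict ∘ₗ (LinearMap.range f).subtype
  have hsurj : Function.Surjective r := by
    rintro ⟨_, v, rfl⟩
    exact ⟨f.rangeRestrict (g v), Subtype.ext (happly v)⟩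
  have hinj := OrzechProperty.injective_of_surjective_endomorphism r hsurj
  ext v
  have hr : r (f.rangeRestrict (g (f v))) = r (f.rangeRestrict v) := Subtype.ext (happly (f v))
  exact congrArg Subtype.val (hinj hr)

instance isLocalHom_fstHom {R M : Type*} [CommRing R] [AddCommGroup M] [Module R M]
    [Module Rᵐᵒᵖ M] [IsCentralScalar R M] :
    IsLocalHom (TrivSqZeroExt.fstHom R R M : TrivSqZeroExt R M →+* R) :=
  ⟨fun _ => TrivSqZeroExt.isUnit_iff_isUnit_fst.2⟩

section Matrix

variable {n : Type*} [Fintype n] {R : Type*} [CommRing R]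

theorem matrix_mul_mul_eq_of_mul_self_mul_eq {M X : Matrix n n R} (h : M * M * X = M) :
    M * X * M = M := by
  classical
  apply (Matrix.toLinAlgEquiv' (R := R) (n := n)).injective
  rw [map_mul, map_mul]
  apply moduleEnd_mul_mul_eq_of_mul_self_mul_eq
  rw [← map_mul, ← map_mul, h]

variable [DecidableEq n]

theorem isUnit_of_isUnit_mapMatrix {K : Type*} [CommRing K] (f : R →+* K) [IsLocalHom f]
    {M : Matrix n n R} (h : IsUnit (f.mapMatrix M)) : IsUnit M := by
  rw [Matrix.isUnit_iff_isUnit_det, ← RingHom.map_det] at h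
  exact (Matrix.isUnit_iff_isUnit_det M).2 (h.of_map f)

theorem isUnit_one_add_conjTranspose_mul_self {m K : Type*} [Fintype m] [Field K] [PartialOrder K]
    [StarRing K] [StarOrderedRing K] (D : Matrix m n K) : IsUnit (1 + Dᴴ * D) :=
  (PosDef.one.add_posSemidef (posSemidef_conjTranspose_mul_self D)).isUnit

variable [StarRing R]

theorem isUnit_one_add_conjTranspose_mul_self_of_isLocalHom {m K : Type*} [Fintype m] [Field K]
    [PartialOrder K] [StarRing K] [StarOrderedRing K] (f : R →+* K) [IsLocalHom f]
    (hf : ∀ x, f (star x) = star (f x)) (D : Matrix m n R) : IsUnit (1 + Dᴴ * D) := by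
  apply isUnit_of_isUnit_mapMatrix f
  have hmap : f.mapMatrix (1 + Dᴴ * D) = 1 + (D.map f)ᴴ * D.map f := by
    rw [map_add, map_one, RingHom.mapMatrix_apply, Matrix.map_mul, conjTranspose_map f hf]
  rw [hmap]
  exact isUnit_one_add_conjTranspose_mul_self _

theorem stmt9_general (hR : ∀ D : Matrix n n R, IsUnit (1 + Dᴴ * D)) (M : Matrix n n R) :
    (∃ G, IsCoreInverse M G) ↔ ∃ X, M * M * X = M := by
  constructor
  · rintro ⟨G, hG⟩
    exact ⟨G * G * M, hG.mul_self_mul_eq⟩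
  · rintro ⟨X, hX⟩
    have hreg : M * X * M = M := matrix_mul_mul_eq_of_mul_self_mul_eq hX
    obtain ⟨Y, hY, hMY⟩ := exists_isSelfAdjoint_mul_of_regular hR hreg
    exact ⟨M * X * Y, isCoreInverse_mul_mul hX hY hMY⟩

end Matrix

theorem stmt9 {n : ℕ} (A B : Matrix (Fin n) (Fin n) ℝ) :
    (∃ G : Matrix (Fin n) (Fin n) (DualNumber ℝ), IsDCGI (dm A B) G) ↔
      DualIndexOne (dm A B) := by
  let _ : StarRing (DualNumber ℝ) := starRingOfComm
  exact stmt9_general (isUnit_one_add_conjTranspose_mul_self_of_isLocalHom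
    (TrivSqZeroExt.fstHom ℝ ℝ ℝ : DualNumber ℝ →+* ℝ) fun _ => rfl) (dm A B)
end

section
/- Let Â = A + εB be an n×n dual matrix possessing a dual core generalized inverse Ĝ = G + εR. Let P be the Moore–Penrose inverse of A, let H be a group inverse of A, and let C be a core inverse of A. Then G = C and R = −C·B·P + H·B·P − H·B·C + C·(B·P)^T·(Iₙ − A·P) + (Iₙ − A·H)·B·H·C. -/
open Matrix

/-
Write `e = A * C` for the orthogonal projection onto the range of `A`, and `e + ε s` for the product
of `A + εB` with its core inverse `C + εR`. Since `e + ε s` is a symmetric idempotent fixing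
`A + εB`, we get `s * A = (1 - e) * B` and `s = s * e + e * s`. As `e = A * P`, this determines `s`:
`s * e = (1 - e) * B * P`, and `e * s` is its transpose (the Golub–Pereyra formula for the
derivative of a projection). With `A * R = s - B * C` this gives `A * H * R = H * (A * R)`, while
`(1 - A * H) * R` is read off the `ε`-part of `(A + εB) * (C + εR)² = C + εR`, because
`1 - A * H` annihilates `A`.
-/

open TrivSqZeroExt
open scoped DualNumber

section StarInverses

/-- `x` is a `{1,3}`-inverse of `a`: it satisfies the first and third Penrose equations, which make
`a * x` a self-adjoint idempotent with the same range as `a`. -/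
structure IsOneThreeInverse {S : Type*} [Mul S] [Star S] (a x : S) : Prop where
  mul_mul_self : a * x * a = a
  isSelfAdjoint : IsSelfAdjoint (a * x)

/-- `x` is a core inverse of `a`. This is the notion of `IsCoreInv` and `IsDCGI` for an arbitrary
multiplication with a star, so that it applies both to a star ring and to its dual numbers. -/
structure IsCoreInverse_s14 {S : Type*} [Mul S] [Star S] (a x : S) : Prop
    extends IsOneThreeInverse a x where
  mul_mul_inverse : a * (x * x) = x

variable {S : Type*}

theorem IsOneThreeInverse.isIdempotentElem [Semigroup S] [Star S] {a x : S}
    (hx : IsOneThreeInverse a x) : IsIdempotentElem (a * x) := by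
  rw [IsIdempotentElem, ← mul_assoc, hx.mul_mul_self]

theorem IsOneThreeInverse.mul_eq_mul [Semigroup S] [StarMul S] {a x y : S}
    (hx : IsOneThreeInverse a x) (hy : IsOneThreeInverse a y) : a * x = a * y :=
  calc
    a * x = star (a * y * (a * x)) := by
      rw [← mul_assoc, hy.mul_mul_self, hx.isSelfAdjoint.star_eq]
    _ = a * x * (a * y) := by
      rw [star_mul, hx.isSelfAdjoint.star_eq, hy.isSelfAdjoint.star_eq]
    _ = a * y := by rw [← mul_assoc, hx.mul_mul_self]

namespace IsCoreInverse_s14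

theorem eq_mul_mul [Semigroup S] [Star S] {a c h : S} (hc : IsCoreInverse_s14 a c)
    (hinner : a * h * a = a) (hcomm : Commute a h) : c = h * (a * c) :=
  calc
    c = a * h * a * (c * c) := by rw [hinner, hc.mul_mul_inverse]
    _ = h * (a * (a * (c * c))) := by rw [hcomm.eq]; simp only [mul_assoc]
    _ = h * (a * c) := by rw [hc.mul_mul_inverse]

theorem mul_self_eq_mul [Semigroup S] [Star S] {a c h : S} (hc : IsCoreInverse_s14 a c)
    (hinner : a * h * a = a) (hcomm : Commute a h) : c * c = h * c :=
  calc
    c * c = h * (a * c) * c := by rw [← hc.eq_mul_mul hinner hcomm]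
    _ = h * (a * (c * c)) := by simp only [mul_assoc]
    _ = h * c := by rw [hc.mul_mul_inverse]

theorem unique [Semigroup S] [StarMul S] {a c d h : S} (hc : IsCoreInverse_s14 a c)
    (hd : IsCoreInverse_s14 a d) (hinner : a * h * a = a) (hcomm : Commute a h) : c = d := by
  rw [hc.eq_mul_mul hinner hcomm, hd.eq_mul_mul hinner hcomm,
    hc.toIsOneThreeInverse.mul_eq_mul hd.toIsOneThreeInverse]

end IsCoreInverse_s14

end StarInverses

section DualNumbers

/-- The star of `a + εb` is `star a + ε (star b)`; on dual matrices it is the transpose `Â^T`. -/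
instance dualNumberStar {S : Type*} [Star S] : Star S[ε] where
  star x := (star x.fst, star x.snd)

variable {S : Type*}

namespace IsOneThreeInverse

theorem fst [Semiring S] [Star S] {x y : S[ε]} (hxy : IsOneThreeInverse x y) :
    IsOneThreeInverse x.fst y.fst where
  mul_mul_self := congrArg TrivSqZeroExt.fst hxy.mul_mul_self
  isSelfAdjoint := congrArg TrivSqZeroExt.fst hxy.isSelfAdjoint

theorem isSelfAdjoint_snd_mul [Semiring S] [Star S] {x y : S[ε]} (hxy : IsOneThreeInverse x y) :
    IsSelfAdjoint (x * y).snd :=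
  congrArg TrivSqZeroExt.snd hxy.isSelfAdjoint

theorem snd_mul_eq_add [Semiring S] [StarMul S] {x y : S[ε]} {p : S}
    (hxy : IsOneThreeInverse x y) (hp : IsOneThreeInverse x.fst p) :
    (x * y).snd = (x * y).snd * (x.fst * p) + x.fst * p * (x * y).snd := by
  have h := congrArg TrivSqZeroExt.snd hxy.isIdempotentElem.eq
  rw [DualNumber.snd_mul, fst_mul, hxy.fst.mul_eq_mul hp, add_comm] at h
  exact h.symm

variable [Ring S] [StarRing S] {x y : S[ε]} {p : S}

theorem snd_mul_mul_fst_mul (hxy : IsOneThreeInverse x y) (hp : IsOneThreeInverse x.fst p) :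
    (x * y).snd * (x.fst * p) = (1 - x.fst * p) * (x.snd * p) := by
  have snd_eq : x.fst * p * x.snd + (x * y).snd * x.fst = x.snd := by
    rw [hp.mul_eq_mul hxy.fst, ← fst_mul, ← DualNumber.snd_mul, hxy.mul_mul_self]
  rw [← mul_assoc, eq_sub_of_add_eq' snd_eq]
  noncomm_ring

theorem fst_mul_mul_snd_mul (hxy : IsOneThreeInverse x y) (hp : IsOneThreeInverse x.fst p) :
    x.fst * p * (x * y).snd = star (x.snd * p) * (1 - x.fst * p) := by
  have h := congrArg star (hxy.snd_mul_mul_fst_mul hp)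
  rwa [star_mul, star_mul (1 - _), star_sub, star_one, hp.isSelfAdjoint.star_eq,
    hxy.isSelfAdjoint_snd_mul.star_eq] at h

end IsOneThreeInverse

namespace IsCoreInverse_s14

theorem fst [Semiring S] [Star S] {x y : S[ε]} (hxy : IsCoreInverse_s14 x y) :
    IsCoreInverse_s14 x.fst y.fst where
  toIsOneThreeInverse := hxy.toIsOneThreeInverse.fst
  mul_mul_inverse := congrArg TrivSqZeroExt.fst hxy.mul_mul_inverse

variable [Ring S] {x y : S[ε]} {h : S}

theorem mul_snd_mul [StarRing S] {p : S} (hxy : IsCoreInverse_s14 x y)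
    (hp : IsOneThreeInverse x.fst p) (hinner : x.fst * h * x.fst = x.fst)
    (hcomm : Commute x.fst h) :
    h * (x * y).snd = h * x.snd * p - y.fst * x.snd * p +
      y.fst * star (x.snd * p) * (1 - x.fst * p) := by
  have hxy₁₃ := hxy.toIsOneThreeInverse
  have mul_proj : h * (x.fst * p) = y.fst := by
    rw [hp.mul_eq_mul hxy₁₃.fst, ← hxy.fst.eq_mul_mul hinner hcomm]
  have mul_proj_snd : h * (x.fst * p * (x * y).snd) =
      y.fst * (x.fst * p * (x * y).snd) := by
    rw [← mul_proj, mul_assoc h, ← mul_assoc (x.fst * p) (x.fst * p), hp.isIdempotentElem.eq]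
  calc
    h * (x * y).snd = h * ((x * y).snd * (x.fst * p)) + h * (x.fst * p * (x * y).snd) := by
      rw [← mul_add, ← hxy₁₃.snd_mul_eq_add hp]
    _ = h * ((1 - x.fst * p) * (x.snd * p)) +
        y.fst * (star (x.snd * p) * (1 - x.fst * p)) := by
      rw [mul_proj_snd, hxy₁₃.snd_mul_mul_fst_mul hp, hxy₁₃.fst_mul_mul_snd_mul hp]
    _ = _ := by
      rw [← mul_assoc h, mul_sub, mul_one, mul_proj, sub_mul]
      simp only [mul_assoc]

theorem one_sub_mul_snd [Star S] (hxy : IsCoreInverse_s14 x y)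
    (hinner : x.fst * h * x.fst = x.fst) (hcomm : Commute x.fst h) :
    (1 - x.fst * h) * y.snd = (1 - x.fst * h) * x.snd * (h * y.fst) := by
  have annihilates : (1 - x.fst * h) * x.fst = 0 := by rw [sub_mul, one_mul, hinner, sub_self]
  calc
    (1 - x.fst * h) * y.snd =
        (1 - x.fst * h) * (x.fst * (y * y).snd + x.snd * (y.fst * y.fst)) := by
      rw [← fst_mul, ← DualNumber.snd_mul, hxy.mul_mul_inverse]
    _ = (1 - x.fst * h) * x.snd * (h * y.fst) := by
      rw [mul_add, ← mul_assoc, annihilates, zero_mul, zero_add, ← mul_assoc,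
        hxy.fst.mul_self_eq_mul hinner hcomm]

theorem snd_eq [StarRing S] {p : S} (hxy : IsCoreInverse_s14 x y)
    (hp : IsOneThreeInverse x.fst p) (hinner : x.fst * h * x.fst = x.fst)
    (hcomm : Commute x.fst h) :
    y.snd = -(y.fst * x.snd * p) + h * x.snd * p - h * x.snd * y.fst +
      y.fst * star (x.snd * p) * (1 - x.fst * p) +
      (1 - x.fst * h) * x.snd * (h * y.fst) :=
  calc
    y.snd = h * (x.fst * y.snd) + (1 - x.fst * h) * y.snd := by
      rw [hcomm.eq]
      noncomm_ring
    _ = h * ((x * y).snd - x.snd * y.fst) + (1 - x.fst * h) * x.snd * (h * y.fst) := by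
      rw [DualNumber.snd_mul, add_sub_cancel_right, hxy.one_sub_mul_snd hinner hcomm]
    _ = _ := by
      rw [mul_sub, hxy.mul_snd_mul hp hinner hcomm, ← mul_assoc h x.snd]
      abel

end IsCoreInverse_s14

theorem stmt14_general [Ring S] [StarRing S] {a b g r p h c : S}
    (hg : IsCoreInverse_s14 (inl a + inr b : S[ε]) (inl g + inr r)) (hp : IsOneThreeInverse a p)
    (hinner : a * h * a = a) (hcomm : Commute a h) (hc : IsCoreInverse_s14 a c) :
    g = c ∧
      r = -(c * b * p) + h * b * p - h * b * c
            + c * star (b * p) * (1 - a * p) + (1 - a * h) * b * (h * c) := by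
  have hgc : g = c := by simpa using hg.fst.unique (d := c) (by simpa) (by simpa) (by simpa)
  subst hgc
  exact ⟨rfl, by simpa using hg.snd_eq (p := p) (by simpa) (by simpa) (by simpa)⟩

end DualNumbers

section Matrices

variable {n : ℕ}

theorem dualNumberEquiv_dm (A B : Matrix (Fin n) (Fin n) ℝ) :
    dualNumberEquiv (dm A B) = inl A + inr B := by
  ext i j
  · change (dm A B i j).fst = _
    simp [dm]
  · change (dm A B i j).snd = _
    simp [dm]

theorem dualNumberEquiv_transpose {m R : Type} [Fintype m] [DecidableEq m] [CommSemiring R]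
    [Star R] [TrivialStar R] (M : Matrix m m R[ε]) :
    dualNumberEquiv Mᵀ = star (dualNumberEquiv M) :=
  congrArg₂ Prod.mk (conjTranspose_eq_transpose_of_trivial _).symm
    (conjTranspose_eq_transpose_of_trivial _).symm

theorem IsDCGI.isCoreInverse {M G : Matrix (Fin n) (Fin n) ℝ[ε]} (h : IsDCGI M G) :
    IsCoreInverse_s14 (dualNumberEquiv M) (dualNumberEquiv G) where
  mul_mul_self := by rw [← map_mul, ← map_mul, h.1]
  mul_mul_inverse := by rw [← map_mul, ← map_mul, h.2.1]
  isSelfAdjoint := by rw [IsSelfAdjoint, ← map_mul, ← dualNumberEquiv_transpose, h.2.2]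

theorem IsCoreInv.isCoreInverse {A C : Matrix (Fin n) (Fin n) ℝ} (h : IsCoreInv A C) :
    IsCoreInverse_s14 A C where
  mul_mul_self := h.1
  mul_mul_inverse := h.2.1
  isSelfAdjoint := h.2.2

theorem IsMoorePenrose.isOneThreeInverse {A P : Matrix (Fin n) (Fin n) ℝ}
    (h : IsMoorePenrose A P) : IsOneThreeInverse A P where
  mul_mul_self := h.1
  isSelfAdjoint := h.2.2.1

end Matrices

theorem stmt14 {n : ℕ} (A B G R P H C : Matrix (Fin n) (Fin n) ℝ)
    (hDCGI : IsDCGI (dm A B) (dm G R))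
    (hP : IsMoorePenrose A P) (hH : IsGroupInv A H) (hC : IsCoreInv A C) :
    G = C ∧
      R = -(C * B * P) + H * B * P - H * B * C
            + C * (B * P)ᵀ * (1 - A * P) + (1 - A * H) * B * (H * C) := by
  have hG := hDCGI.isCoreInverse
  rw [dualNumberEquiv_dm, dualNumberEquiv_dm] at hG
  exact stmt14_general hG hP.isOneThreeInverse hH.1 hH.2.2 hC.isCoreInverse
end
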